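/- Low-rank counterexample: For the one-hidden-layer network with leaky ReLU σ(t) = max{t, αt}, 0 < α < 1, W_1ᵀ = [[1,0],[−1,0]] (rank 1), b_1 = (−1,−1)ᵀ, W_2ᵀ = [[1,1],[0,0]], b_2 = (0, −2α)ᵀ, the output satisfies (f_2)_1(x) > (f_2)_2(x) exactly when x₁ ∈ (−∞, −1) ∪ (1, ∞), so the decision region of class 1 equals {x ∈ ℝ² : x₁ < −1} ∪ {x ∈ ℝ² : x₁ > 1}, a disconnected set. -/

import Mathlib

/-!
For `α ≤ 1` the leaky ReLU splits as `σ t = α * t + (1 - α) * max t 0`. Both hidden neurons see the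
input only through one functional `g`, with opposite signs, so in `σ (g x - b) + σ (a - g x)` the
linear parts add up to the constant `α * (a - b)`. What is left is a multiple of
`max (g x - b) 0 + max (a - g x) 0`, which vanishes exactly on the slab `a ≤ g x ≤ b`: comparing
with that constant cuts the slab out of the input space and separates its two sides.
-/

open Set

theorem max_sub_zero_add_max_sub_zero_pos_iff {G : Type*} [AddCommGroup G]
    [LinearOrder G] [IsOrderedAddMonoid G] {a b t : G} :
    0 < max (t - b) 0 + max (a - t) 0 ↔ t < a ∨ b < t := by
  have hb : 0 ≤ max (t - b) 0 := le_max_right _ _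
  have ha : 0 ≤ max (a - t) 0 := le_max_right _ _
  rw [(add_nonneg hb ha).lt_iff_ne', Ne, add_eq_zero_iff_of_nonneg hb ha, not_and_or, or_comm]
  simp

section LeakyReLU

variable {R : Type*} [CommRing R] [LinearOrder R]

/-- The leaky rectified linear unit of slope `α`, the activation function of the network. It is
written as a maximum, which is the usual piecewise definition only for `α ≤ 1`. -/
def leakyReLU (α t : R) : R := max t (α * t)

variable [IsStrictOrderedRing R] {α : R}

theorem leakyReLU_eq_add_mul_max (hα : α ≤ 1) (t : R) :
    leakyReLU α t = α * t + (1 - α) * max t 0 := by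
  rw [leakyReLU, mul_max_of_nonneg _ _ (sub_nonneg.2 hα), ← max_add_add_left]
  congr 1 <;> ring

theorem leakyReLU_sub_add_leakyReLU_sub (hα : α ≤ 1) (a b t : R) :
    leakyReLU α (t - b) + leakyReLU α (a - t) =
      α * (a - b) + (1 - α) * (max (t - b) 0 + max (a - t) 0) := by
  rw [leakyReLU_eq_add_mul_max hα, leakyReLU_eq_add_mul_max hα]
  ring

theorem lt_leakyReLU_sub_add_leakyReLU_sub_iff (hα : α < 1) {a b t : R} :
    α * (a - b) < leakyReLU α (t - b) + leakyReLU α (a - t) ↔ t < a ∨ b < t := by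
  rw [leakyReLU_sub_add_leakyReLU_sub hα.le, lt_add_iff_pos_right,
    mul_pos_iff_of_pos_left (sub_pos.2 hα), max_sub_zero_add_max_sub_zero_pos_iff]

end LeakyReLU

theorem not_isPreconnected_preimage_Iio_union_Ioi {X Y : Type*} [TopologicalSpace X]
    [LinearOrder Y] [TopologicalSpace Y] [OrderClosedTopology Y] {g : X → Y} (hg : Continuous g)
    {a b : Y} (hab : a ≤ b) {x y : X} (hx : g x < a) (hy : b < g y) :
    ¬ IsPreconnected (g ⁻¹' (Iio a ∪ Ioi b)) := by
  intro h
  have hconn : (g '' (g ⁻¹' (Iio a ∪ Ioi b))).OrdConnected :=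
    (h.image g hg.continuousOn).ordConnected
  have ha : a ∈ g '' (g ⁻¹' (Iio a ∪ Ioi b)) :=
    hconn.out (mem_image_of_mem g (Or.inl hx)) (mem_image_of_mem g (Or.inr hy))
      ⟨hx.le, hab.trans hy.le⟩
  rcases image_preimage_subset g _ ha with ha | hb
  · exact lt_irrefl a ha
  · exact hab.not_gt hb

theorem low_rank_counterexample_general {X R : Type*} [TopologicalSpace X]
    [CommRing R] [LinearOrder R] [IsStrictOrderedRing R] [TopologicalSpace R]
    [OrderClosedTopology R] {g : X → R} (hg : Continuous g) {α a b : R} (hα : α < 1)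
    (hab : a ≤ b) {x y : X} (hx : g x < a) (hy : b < g y) :
    {z | α * (a - b) < leakyReLU α (g z - b) + leakyReLU α (a - g z)} =
        {z | g z < a} ∪ {z | g z > b} ∧
      ¬ IsPreconnected {z | α * (a - b) < leakyReLU α (g z - b) + leakyReLU α (a - g z)} := by
  have hregion : {z | α * (a - b) < leakyReLU α (g z - b) + leakyReLU α (a - g z)} =
      {z | g z < a} ∪ {z | g z > b} :=
    ext fun _ => lt_leakyReLU_sub_add_leakyReLU_sub_iff hα
  refine ⟨hregion, ?_⟩
  rw [hregion]
  exact not_isPreconnected_preimage_Iio_union_Ioi hg hab hx hy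

theorem low_rank_counterexample (α : ℝ) (hα0 : 0 < α) (hα1 : α < 1) :
    let f₁ : (Fin 2 → ℝ) → ℝ := fun x =>
      max (x 0 - 1) (α * (x 0 - 1)) + max (-(x 0 + 1)) (-α * (x 0 + 1))
    let f₂ : (Fin 2 → ℝ) → ℝ := fun _ => -2 * α
    {x : Fin 2 → ℝ | f₂ x < f₁ x}
        = {x : Fin 2 → ℝ | x 0 < -1} ∪ {x : Fin 2 → ℝ | x 0 > 1} ∧
    ¬ IsPreconnected {x : Fin 2 → ℝ | f₂ x < f₁ x} := by
  intro f₁ f₂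
  have hf₁ : f₁ = fun x => leakyReLU α (x 0 - 1) + leakyReLU α (-1 - x 0) := by
    funext x
    simp only [f₁, leakyReLU]
    ring_nf
  have hf₂ : f₂ = fun _ => α * (-1 - 1) := by
    funext x
    simp only [f₂]
    ring
  rw [hf₁, hf₂]
  exact low_rank_counterexample_general (g := fun x : Fin 2 → ℝ => x 0) (continuous_apply 0) hα1
    (by norm_num) (x := fun _ => -2) (y := fun _ => 2) (by norm_num) (by norm_num)
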